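/- For all integers p ≥ 1, k ≥ 1 and real numbers d_0, d_1, ..., d_p, the polynomial P_k(d_0, d_1, ..., d_p) = Σ_{π ∈ NC²_{2pk}(W_0^k)} d_0^{j_0(π)} d_1^{j_1(π)} ··· d_p^{j_p(π)} has the explicit form P_k(d_0, d_1, ..., d_p) = Σ (1/k) ∏_{i=0}^{p} C(k, j_i) · d_0^{j_0 − 1} d_1^{j_1} ··· d_p^{j_p}, where the sum runs over all tuples (j_0, ..., j_p) of positive integers with j_0 + j_1 + ... + j_p = pk + 1. -/

import Mathlib

/-- The letter at position `r` (1-based, `1 ≤ r ≤ 2p`) of the word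
`W₀ = 1 2 … p p* … 2* 1*`; here `(l, false)` encodes the letter `l` and
`(l, true)` encodes the starred letter `l*`. -/
def letter0 (p r : ℕ) : ℕ × Bool :=
  if r ≤ p then (r, false) else (2 * p + 1 - r, true)

/-- The label of position `m` (1-based) under the periodic word `Wᵢᵏ`, where `Wᵢ`
is the cyclic shift of `W₀` to the right by `i` positions. -/
def labelW (p i m : ℕ) : ℕ × Bool :=
  letter0 p ((m - 1 + (2 * p - i)) % (2 * p) + 1)

/-- `π` is a noncrossing pair partition of `{1, …, m}`, encoded as the finite set of
its blocks, each block written as an ordered pair `(a, b)` with `a < b`: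
all entries lie in `{1, …, m}`, every point of `{1, …, m}` is covered, distinct
blocks are disjoint, and no two blocks cross. -/
def IsNCPP (m : ℕ) (π : Finset (ℕ × ℕ)) : Prop :=
  (∀ b ∈ π, 1 ≤ b.1 ∧ b.2 ≤ m ∧ b.1 < b.2) ∧
  (∀ x, 1 ≤ x → x ≤ m → ∃ b ∈ π, x = b.1 ∨ x = b.2) ∧
  (∀ b ∈ π, ∀ c ∈ π, (b.1 = c.1 ∨ b.1 = c.2 ∨ b.2 = c.1 ∨ b.2 = c.2) → b = c) ∧
  (∀ b ∈ π, ∀ c ∈ π, ¬(b.1 < c.1 ∧ c.1 < b.2 ∧ b.2 < c.2))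

/-- `π ∈ NC²₂ₚₖ(Wᵢᵏ)`: a noncrossing pair partition of `{1, …, 2pk}` each of whose
blocks consists of a position labelled `l` and a position labelled `l*` for some
`l ∈ {1, …, p}` (labels taken from the word `Wᵢᵏ`). -/
def AdaptedNCPP (p i k : ℕ) (π : Finset (ℕ × ℕ)) : Prop :=
  IsNCPP (2 * p * k) π ∧
  ∀ b ∈ π, ∃ l, 1 ≤ l ∧ l ≤ p ∧
    ((labelW p i b.1 = (l, false) ∧ labelW p i b.2 = (l, true)) ∨
     (labelW p i b.1 = (l, true) ∧ labelW p i b.2 = (l, false)))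

/-- The right-leg statistic `jₗ(π) = |R_{l+1}(π)| + |R_{l}*(π)|`: the number of blocks
whose right leg (larger element) is labelled `l+1`, plus the number of blocks whose
right leg is labelled `l*` (the conventions `R₀* = R_{p+1} = ∅` hold automatically,
since those labels never occur). -/
def jstat (p i : ℕ) (π : Finset (ℕ × ℕ)) (l : ℕ) : ℕ :=
  (π.filter fun b => labelW p i b.2 = (l + 1, false)).card +
  (π.filter fun b => labelW p i b.2 = (l, true)).card

open Classical in
/-- The finset `NC²₂ₚₖ(Wᵢᵏ)` of noncrossing pair partitions of `{1, …, 2pk}`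
adapted to `Wᵢᵏ`. -/
noncomputable def NCset (p i k : ℕ) : Finset (Finset (ℕ × ℕ)) :=
  (Finset.Icc 1 (2 * p * k) ×ˢ Finset.Icc 1 (2 * p * k)).powerset.filter
    (AdaptedNCPP p i k)

open Classical in
/-- `Nᵢ(k, (j₀, …, j_p))`: the number of `π ∈ NC²₂ₚₖ(Wᵢᵏ)` with `jₗ(π) = jₗ`
for all `0 ≤ l ≤ p`. -/
noncomputable def Ncount (p i k : ℕ) (j : Fin (p + 1) → ℕ) : ℕ :=
  ((NCset p i k).filter fun π => ∀ l : Fin (p + 1), jstat p i π (l : ℕ) = j l).card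

/-- The generating function `𝒩ᵢ(x, d) = Σ_k (Σ_j Nᵢ(k, j) d^j) x^k ∈ ℝ[[x]]`;
for each `k` only finitely many of the counts `Nᵢ(k, j)` are nonzero, so the inner
`tsum` is a finite sum. -/
noncomputable def genFun (p i : ℕ) (d : Fin (p + 1) → ℝ) : PowerSeries ℝ :=
  PowerSeries.mk fun k =>
    ∑' j : Fin (p + 1) → ℕ, (Ncount p i k j : ℝ) * ∏ l, d l ^ j l

/-!
Read the word `W₀ᵏ` as a zigzag path of height between `0` and `p`. Two letters can be matched
exactly when their positions add up to `1` modulo `2p`, and a matched block with legs `a < b` then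
contributes the variable `d_l`, with `l` the height of the path right after `a` and right before
`b`. The block which covers the first letter splits the rest of a noncrossing pairing into two
independent pairings of subwords, so the generating series of subwords of the periodic word, graded
by the number of periods, satisfy product recurrences.

Let `U_l` and `D_l` be the series of the words which start and end at the same point of height `l`,
on the way up and on the way down respectively. The recurrences exhibit both as solutions of the
same linear equation `u = 1 + X f u`, so `U_l = D_l` for `l < p`, and they then yield
`d_l D_l = d_l + d_0 v`, where `v = U_0 - 1` is the series to be computed. Since
`v = X U_0 ∏_{1 ≤ l ≤ p} d_l D_l`, it follows that `v = X φ(v)` with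
`φ(X) = (1 + X) ∏_{1 ≤ l ≤ p} (d_l + d_0 X)`, and Lagrange inversion gives the coefficients of `v`.
-/

section NoncrossingPairings

/-- `π` is a noncrossing pair partition of the half-open interval `{a + 1, …, b}`, encoded by its
blocks as in `IsNCPP`. Intervals occur because the blocks inside and to the right of a given block
pair off intervals again. -/
def IsNCPairing (a b : ℕ) (π : Finset (ℕ × ℕ)) : Prop :=
  (∀ x ∈ π, a < x.1 ∧ x.2 ≤ b ∧ x.1 < x.2) ∧
  (∀ m, a < m → m ≤ b → ∃ x ∈ π, m = x.1 ∨ m = x.2) ∧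
  (∀ x ∈ π, ∀ y ∈ π, (x.1 = y.1 ∨ x.1 = y.2 ∨ x.2 = y.1 ∨ x.2 = y.2) → x = y) ∧
  (∀ x ∈ π, ∀ y ∈ π, ¬(x.1 < y.1 ∧ y.1 < x.2 ∧ x.2 < y.2))

/-- The blocks of `π` lying inside `{a + 1, …, b}`. -/
def restrictBlocks (a b : ℕ) (π : Finset (ℕ × ℕ)) : Finset (ℕ × ℕ) :=
  π.filter fun x => a < x.1 ∧ x.2 ≤ b

variable {a b c : ℕ} {π π₁ π₂ : Finset (ℕ × ℕ)}

theorem isNCPairing_zero_iff_isNCPP {m : ℕ} : IsNCPairing 0 m π ↔ IsNCPP m π :=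
  Iff.rfl

theorem isNCPairing_iff_eq_empty (h : b ≤ a) : IsNCPairing a b π ↔ π = ∅ := by
  constructor
  · intro hπ
    refine Finset.eq_empty_of_forall_notMem fun x hx => ?_
    have := hπ.1 x hx
    omega
  · rintro rfl
    exact ⟨by simp, fun m _ _ => by omega, by simp, by simp⟩

namespace IsNCPairing

theorem subset_Icc_product (h : IsNCPairing a b π) :
    π ⊆ Finset.Icc (a + 1) b ×ˢ Finset.Icc (a + 1) b := by
  intro x hx
  have := h.1 x hx
  simp only [Finset.mem_product, Finset.mem_Icc]
  omega

theorem restrict {a' b' : ℕ} (h : IsNCPairing a b π) (ha : a ≤ a') (hb : b' ≤ b)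
    (hsep : ∀ x ∈ π, x.1 ≤ a' ∧ (x.2 ≤ a' ∨ b' < x.2) ∨ a' < x.1 ∧ x.2 ≤ b' ∨ b' < x.1) :
    IsNCPairing a' b' (restrictBlocks a' b' π) := by
  obtain ⟨hmem, hcover, hdisj, hcross⟩ := h
  simp only [IsNCPairing, restrictBlocks, Finset.mem_filter]
  refine ⟨fun x hx => ⟨hx.2.1, hx.2.2, (hmem x hx.1).2.2⟩, fun m ham hmb => ?_,
    fun x hx y hy => hdisj x hx.1 y hy.1, fun x hx y hy => hcross x hx.1 y hy.1⟩
  obtain ⟨x, hx, hxm⟩ := hcover m (by omega) (by omega)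
  have := hmem x hx
  have := hsep x hx
  exact ⟨x, ⟨hx, by omega⟩, hxm⟩

theorem eq_or_inside_or_right (h : IsNCPairing a b π) (hc : (a + 1, c + 1) ∈ π) :
    ∀ x ∈ π, x = (a + 1, c + 1) ∨ (a + 1 < x.1 ∧ x.2 ≤ c) ∨ c + 1 < x.1 := by
  intro x hx
  refine or_iff_not_imp_left.2 fun hne => ?_
  have hmem := h.1 x hx
  have hdisj := mt (h.2.2.1 x hx _ hc) hne
  have hcross := h.2.2.2 _ hc x hx
  dsimp only at hdisj hcross
  omega

theorem restrictBlocks_inside (h : IsNCPairing a b π) (hc : (a + 1, c + 1) ∈ π) :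
    IsNCPairing (a + 1) c (restrictBlocks (a + 1) c π) := by
  have hcb := (h.1 _ hc).2.1
  dsimp only at hcb
  refine h.restrict (by omega) (by omega) fun x hx => ?_
  rcases h.eq_or_inside_or_right hc x hx with rfl | hx' | hx' <;> omega

theorem restrictBlocks_right (h : IsNCPairing a b π) (hc : (a + 1, c + 1) ∈ π) :
    IsNCPairing (c + 1) b (restrictBlocks (c + 1) b π) := by
  have hac := (h.1 _ hc).2.2
  dsimp only at hac
  refine h.restrict (by omega) le_rfl fun x hx => ?_
  have hmem := h.1 x hx
  rcases h.eq_or_inside_or_right hc x hx with rfl | hx' | hx' <;> omega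

theorem insert_restrictBlocks_union (h : IsNCPairing a b π) (hc : (a + 1, c + 1) ∈ π) :
    insert (a + 1, c + 1) (restrictBlocks (a + 1) c π ∪ restrictBlocks (c + 1) b π)
      = π := by
  ext x
  simp only [restrictBlocks, Finset.mem_insert, Finset.mem_union, Finset.mem_filter]
  constructor
  · rintro (rfl | hx | hx)
    exacts [hc, hx.1, hx.1]
  · intro hx
    have hmem := h.1 x hx
    rcases h.eq_or_inside_or_right hc x hx with hx' | hx' | hx'
    exacts [Or.inl hx', Or.inr (Or.inl ⟨hx, hx'⟩), Or.inr (Or.inr ⟨hx, hx', hmem.2.1⟩)]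

theorem insert_union (hac : a < c) (hcb : c < b) (h₁ : IsNCPairing (a + 1) c π₁)
    (h₂ : IsNCPairing (c + 1) b π₂) : IsNCPairing a b (insert (a + 1, c + 1) (π₁ ∪ π₂)) := by
  obtain ⟨hmem₁, hcover₁, hdisj₁, hcross₁⟩ := h₁
  obtain ⟨hmem₂, hcover₂, hdisj₂, hcross₂⟩ := h₂
  simp only [IsNCPairing, Finset.mem_insert, Finset.mem_union]
  refine ⟨?_, fun m ham hmb => ?_, ?_, ?_⟩
  · rintro x (rfl | hx | hx) <;> grind
  · obtain rfl | rfl | hm | hm : m = a + 1 ∨ m = c + 1 ∨ (a + 1 < m ∧ m ≤ c) ∨ c + 1 < m := by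
      omega
    · exact ⟨_, Or.inl rfl, Or.inl rfl⟩
    · exact ⟨_, Or.inl rfl, Or.inr rfl⟩
    · exact (hcover₁ m hm.1 hm.2).imp fun x hx => ⟨Or.inr (Or.inl hx.1), hx.2⟩
    · exact (hcover₂ m hm hmb).imp fun x hx => ⟨Or.inr (Or.inr hx.1), hx.2⟩
  · rintro x (rfl | hx | hx) y (rfl | hy | hy) hxy <;> grind
  · rintro x (rfl | hx | hx) y (rfl | hy | hy) <;> grind

theorem restrictBlocks_inside_insert_union (h₁ : IsNCPairing (a + 1) c π₁)
    (h₂ : IsNCPairing (c + 1) b π₂) :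
    restrictBlocks (a + 1) c (insert (a + 1, c + 1) (π₁ ∪ π₂)) = π₁ := by
  ext x
  have hmem₁ := h₁.1 x
  have hmem₂ := h₂.1 x
  simp only [restrictBlocks, Finset.mem_filter, Finset.mem_insert, Finset.mem_union]
  grind

theorem restrictBlocks_right_insert_union (hac : a < c) (h₁ : IsNCPairing (a + 1) c π₁)
    (h₂ : IsNCPairing (c + 1) b π₂) :
    restrictBlocks (c + 1) b (insert (a + 1, c + 1) (π₁ ∪ π₂)) = π₂ := by
  ext x
  have hmem₁ := h₁.1 x
  have hmem₂ := h₂.1 x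
  simp only [restrictBlocks, Finset.mem_filter, Finset.mem_insert, Finset.mem_union]
  grind

theorem prod_insert_union {M : Type*} [CommMonoid M] (g : ℕ × ℕ → M)
    (h₁ : IsNCPairing (a + 1) c π₁) (h₂ : IsNCPairing (c + 1) b π₂) :
    ∏ x ∈ insert (a + 1, c + 1) (π₁ ∪ π₂), g x
      = g (a + 1, c + 1) * ((∏ x ∈ π₁, g x) * ∏ x ∈ π₂, g x) := by
  have hmem₁ := h₁.1
  have hmem₂ := h₂.1
  rw [Finset.prod_insert (by grind), Finset.prod_union]
  exact Finset.disjoint_left.2 (by grind)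

theorem exists_partner (h : IsNCPairing a b π) (hab : a < b) :
    ∃ c ∈ Finset.Ico (a + 1) b, (a + 1, c + 1) ∈ π ∧ ∀ c', (a + 1, c' + 1) ∈ π → c' = c := by
  obtain ⟨⟨x, y⟩, hxy, hax⟩ := h.2.1 (a + 1) (by omega) hab
  have hmem := h.1 _ hxy
  dsimp only at hax hmem
  obtain ⟨rfl, hy⟩ : x = a + 1 ∧ y = (y - 1) + 1 := by omega
  rw [hy] at hxy
  refine ⟨y - 1, Finset.mem_Ico.2 (by omega), hxy, fun c' hc' => ?_⟩
  simpa using h.2.2.1 _ hc' _ hxy (Or.inl rfl)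

end IsNCPairing

open Classical in
/-- The finset of noncrossing pair partitions of `{a + 1, …, b}`. -/
noncomputable def ncPairings (a b : ℕ) : Finset (Finset (ℕ × ℕ)) :=
  (Finset.Icc (a + 1) b ×ˢ Finset.Icc (a + 1) b).powerset.filter (IsNCPairing a b)

@[simp]
theorem mem_ncPairings : π ∈ ncPairings a b ↔ IsNCPairing a b π := by
  simpa [ncPairings] using IsNCPairing.subset_Icc_product

variable {R : Type*} [CommSemiring R]

/-- The multiplicative generating sum `∑_π ∏_{x ∈ π} g x` over the noncrossing pair partitions `π`
of `{a + 1, …, b}`, for a weight `g` on blocks. -/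
noncomputable def ncSum (g : ℕ × ℕ → R) (a b : ℕ) : R :=
  ∑ π ∈ ncPairings a b, ∏ x ∈ π, g x

theorem ncSum_of_le (g : ℕ × ℕ → R) (h : b ≤ a) : ncSum g a b = 1 := by
  have : ncPairings a b = {∅} := by
    ext π
    rw [mem_ncPairings, isNCPairing_iff_eq_empty h, Finset.mem_singleton]
  simp [ncSum, this]

theorem sum_ncPairings_filter_mem (g : ℕ × ℕ → R) (hac : a < c) (hcb : c < b) :
    ∑ π ∈ ncPairings a b with (a + 1, c + 1) ∈ π, ∏ x ∈ π, g x
      = g (a + 1, c + 1) * (ncSum g (a + 1) c * ncSum g (c + 1) b) := by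
  rw [ncSum, ncSum, Finset.sum_mul_sum, ← Finset.sum_product', Finset.mul_sum]
  refine Finset.sum_nbij' (fun π => (restrictBlocks (a + 1) c π, restrictBlocks (c + 1) b π))
    (fun q => insert (a + 1, c + 1) (q.1 ∪ q.2)) ?_ ?_ ?_ ?_ ?_ <;>
    simp only [Finset.mem_filter, Finset.mem_product, mem_ncPairings]
  · exact fun π hπ => ⟨hπ.1.restrictBlocks_inside hπ.2, hπ.1.restrictBlocks_right hπ.2⟩
  · exact fun q hq => ⟨hq.1.insert_union hac hcb hq.2, Finset.mem_insert_self _ _⟩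
  · exact fun π hπ => hπ.1.insert_restrictBlocks_union hπ.2
  · exact fun q hq => Prod.ext (hq.1.restrictBlocks_inside_insert_union hq.2)
      (hq.1.restrictBlocks_right_insert_union hac hq.2)
  · intro π hπ
    rw [← (hπ.1.restrictBlocks_inside hπ.2).prod_insert_union g (hπ.1.restrictBlocks_right hπ.2),
      hπ.1.insert_restrictBlocks_union hπ.2]

theorem ncSum_eq_sum (g : ℕ × ℕ → R) (hab : a < b) :
    ncSum g a b = ∑ c ∈ Finset.Ico (a + 1) b,
      g (a + 1, c + 1) * (ncSum g (a + 1) c * ncSum g (c + 1) b) := by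
  have hpartner (π) (hπ : π ∈ ncPairings a b) : ∏ x ∈ π, g x
      = ∑ c ∈ Finset.Ico (a + 1) b, if (a + 1, c + 1) ∈ π then ∏ x ∈ π, g x else 0 := by
    obtain ⟨c, hc, hcπ, huniq⟩ := (mem_ncPairings.1 hπ).exists_partner hab
    rw [Finset.sum_eq_single_of_mem c hc fun c' _ hne => if_neg fun h => hne (huniq c' h),
      if_pos hcπ]
  rw [ncSum, Finset.sum_congr rfl hpartner, Finset.sum_comm]
  refine Finset.sum_congr rfl fun c hc => ?_
  rw [Finset.mem_Ico] at hc
  rw [← Finset.sum_filter, sum_ncPairings_filter_mem g (by omega) hc.2]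

theorem ncSum_add_right (g : ℕ × ℕ → R) (a b t : ℕ) :
    ncSum g (a + t) (b + t) = ncSum (fun x => g (x.1 + t, x.2 + t)) a b := by
  induction hn : b - a using Nat.strong_induction_on generalizing a b with
  | _ n ih =>
    rcases le_or_gt b a with hba | hab
    · rw [ncSum_of_le _ hba, ncSum_of_le _ (by omega)]
    rw [ncSum_eq_sum _ hab, ncSum_eq_sum _ (by omega), add_right_comm a t 1, ← Finset.sum_Ico_add']
    refine Finset.sum_congr rfl fun c hc => ?_
    rw [Finset.mem_Ico] at hc
    rw [add_right_comm c t 1, ih _ (by omega) (a + 1) c rfl, ih _ (by omega) (c + 1) b rfl]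

end NoncrossingPairings

section LagrangeInversion

open PowerSeries

variable {R : Type*}

theorem coeff_X_mul_derivative [CommSemiring R] (f : R⟦X⟧) (n : ℕ) :
    coeff n (X * d⁄dX R f) = n * coeff n f := by
  cases n with
  | zero => simp
  | succ n => rw [coeff_succ_X_mul, coeff_derivative, Nat.cast_succ, mul_comm]

variable [CommRing R]

theorem subst_X_mul_add_C {v : R⟦X⟧} (hv : HasSubst v) (g : R⟦X⟧) (r : R) :
    (X * g + C r).subst v = v * g.subst v + C r := by
  rw [subst_add hv, subst_mul hv, subst_X hv, subst_C]
  rfl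

theorem coeff_zero_subst_of_constantCoeff_eq_zero {v : R⟦X⟧} (hv : constantCoeff v = 0)
    (f : R⟦X⟧) : coeff 0 (f.subst v) = coeff 0 f := by
  conv_lhs => rw [eq_X_mul_shift_add_const f,
    subst_X_mul_add_C (HasSubst.of_constantCoeff_zero' hv)]
  simp [hv]

theorem succ_mul_coeff_X_mul_derivative_mul_mul_pow (g φ : R⟦X⟧) (n : ℕ) :
    (n + 1) * coeff n (X * d⁄dX R (g * φ) * φ ^ n)
      = n * (coeff n (g * φ ^ (n + 1)) + coeff n (X * d⁄dX R g * φ ^ (n + 1))) := by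
  have hseries : C ((n : R) + 1) * (X * d⁄dX R (g * φ) * φ ^ n)
      = X * d⁄dX R (g * φ ^ (n + 1)) + C (n : R) * (X * d⁄dX R g * φ ^ (n + 1)) := by
    simp only [Derivation.leibniz, derivative_pow, smul_eq_mul, Nat.add_sub_cancel, map_add,
      map_natCast, map_one, Nat.cast_succ]
    ring
  rw [mul_add, ← coeff_X_mul_derivative, ← coeff_C_mul, ← coeff_C_mul, hseries, map_add]

variable [IsAddTorsionFree R]

theorem lagrange_inversion {v φ : R⟦X⟧} (hv : v = X * φ.subst v) (n : ℕ) (f : R⟦X⟧) :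
    n * coeff n (f.subst v) = coeff n (X * d⁄dX R f * φ ^ n) := by
  have hv₀ : constantCoeff v = 0 := by rw [hv]; simp
  have hs := HasSubst.of_constantCoeff_zero' hv₀
  induction n generalizing f with
  | zero => simp
  | succ n ih =>
    obtain ⟨g, r, rfl⟩ : ∃ g r, f = X * g + C r := ⟨_, _, eq_X_mul_shift_add_const f⟩
    have hlhs : coeff (n + 1) ((X * g + C r).subst v) = coeff n ((g * φ).subst v) := by
      have : (X * g + C r).subst v = X * (g * φ).subst v + C r := by
        rw [subst_X_mul_add_C hs, subst_mul hs]
        linear_combination (g.subst v) * hv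
      rw [this, map_add, coeff_succ_X_mul, coeff_C, if_neg n.succ_ne_zero, add_zero]
    have hrhs : coeff (n + 1) (X * d⁄dX R (X * g + C r) * φ ^ (n + 1))
        = coeff n (g * φ ^ (n + 1)) + coeff n (X * d⁄dX R g * φ ^ (n + 1)) := by
      rw [mul_assoc, coeff_succ_X_mul, ← map_add]
      congr 1
      simp only [map_add, Derivation.leibniz, derivative_X, derivative_C, smul_eq_mul]
      ring
    rw [hlhs, hrhs]
    rcases eq_or_ne n 0 with rfl | hn
    · rw [coeff_zero_subst_of_constantCoeff_eq_zero hv₀]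
      simp [mul_assoc]
    · refine nsmul_right_injective hn ?_
      simp only [nsmul_eq_mul]
      rw [← succ_mul_coeff_X_mul_derivative_mul_mul_pow, ← ih (g * φ), Nat.cast_succ]
      ring

theorem succ_mul_coeff_succ_of_eq_X_mul_subst {v φ : R⟦X⟧} (hv : v = X * φ.subst v) (n : ℕ) :
    (n + 1) * coeff (n + 1) v = coeff n (φ ^ (n + 1)) := by
  have hs : HasSubst v := HasSubst.of_constantCoeff_zero' (by rw [hv]; simp)
  have := lagrange_inversion hv (n + 1) X
  rwa [subst_X hs, derivative_X, mul_one, coeff_succ_X_mul, Nat.cast_succ] at this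

end LagrangeInversion

section NarayanaKernel

open PowerSeries

variable {R : Type*}

theorem coeff_C_add_C_mul_X_pow [CommSemiring R] (a b : R) (k n : ℕ) :
    coeff n ((C a + C b * X) ^ k) = k.choose n * a ^ (k - n) * b ^ n := by
  have hterm (m : ℕ) : (C b * X) ^ m * C a ^ (k - m) * (k.choose m : R⟦X⟧)
      = C (k.choose m * a ^ (k - m) * b ^ m) * X ^ m := by
    simp only [mul_pow, map_mul, map_pow, map_natCast]
    ring
  simp only [add_comm (C a), add_pow, hterm, map_sum, coeff_C_mul_X_pow,
    Finset.sum_ite_eq, Finset.mem_range, Nat.lt_succ_iff]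
  split_ifs with h
  · rfl
  · rw [Nat.choose_eq_zero_of_lt (by omega)]
    simp

theorem coeff_prod_eq_sum_antidiagonalTuple [CommSemiring R] {N : ℕ} (f : Fin N → R⟦X⟧) (n : ℕ) :
    coeff n (∏ i, f i)
      = ∑ m ∈ Finset.Nat.antidiagonalTuple N n, ∏ i, coeff (m i) (f i) := by
  rw [coeff_prod]
  refine Finset.sum_nbij' (⇑) Finsupp.equivFunOnFinite.symm ?_ ?_ ?_ ?_ ?_ <;>
    simp [Finset.Nat.mem_antidiagonalTuple]

theorem sum_antidiagonalTuple_sub [AddCommMonoid R] (p n : ℕ) (F : (Fin (p + 1) → ℕ) → R)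
    (hF : ∀ j i, n + 1 < j i → F j = 0) :
    ∑ m ∈ Finset.Nat.antidiagonalTuple (p + 1) n, F (fun i => n + 1 - m i)
      = ∑ j ∈ Finset.Nat.antidiagonalTuple (p + 1) (p * (n + 1) + 1) with ∀ i, 1 ≤ j i, F j := by
  have hle {m : Fin (p + 1) → ℕ} (hm : ∑ i, m i = n) (i) : m i ≤ n :=
    hm ▸ Finset.single_le_sum (fun _ _ => Nat.zero_le _) (Finset.mem_univ i)
  have hsum {m : Fin (p + 1) → ℕ} (hm : ∀ i, m i ≤ n + 1) :
      ∑ i, (n + 1 - m i) + ∑ i, m i = p * (n + 1) + 1 + n := by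
    rw [← Finset.sum_add_distrib, Finset.sum_congr rfl fun i _ => Nat.sub_add_cancel (hm i)]
    simp only [Finset.sum_const, Finset.card_univ, Fintype.card_fin, smul_eq_mul]
    ring
  refine Finset.sum_of_injOn (fun m i => n + 1 - m i) ?_ ?_ ?_ fun _ _ => rfl
  · intro m hm m' hm' h
    rw [Finset.mem_coe, Finset.Nat.mem_antidiagonalTuple] at hm hm'
    funext i
    have := congrFun h i
    have := hle hm i
    have := hle hm' i
    dsimp only at *
    omega
  · intro m hm
    rw [Finset.mem_coe, Finset.Nat.mem_antidiagonalTuple] at hm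
    rw [Finset.mem_coe, Finset.mem_filter, Finset.Nat.mem_antidiagonalTuple]
    have := hsum fun i => (hle hm i).trans n.le_succ
    refine ⟨by dsimp only; omega, fun i => ?_⟩
    have := hle hm i
    dsimp only
    omega
  · intro j hj hj'
    rw [Finset.mem_filter, Finset.Nat.mem_antidiagonalTuple] at hj
    by_contra hne
    have hjle : ∀ i, j i ≤ n + 1 := fun i => not_lt.1 fun h => hne (hF j i h)
    refine hj' ⟨fun i => n + 1 - j i, ?_, funext fun i => Nat.sub_sub_self (hjle i)⟩
    rw [Finset.mem_coe, Finset.Nat.mem_antidiagonalTuple]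
    have := hsum hjle
    omega

/-- The series `φ(X) = (1 + X) ∏_{1 ≤ l ≤ p} (e_l + e_0 X)`, for which `v = N - 1`, with `N` the
generating function of the weighted adapted partitions, satisfies `v = X φ(v)`. -/
noncomputable def narayanaKernel [CommSemiring R] (p : ℕ) (e : ℕ → R) : R⟦X⟧ :=
  (1 + X) * ∏ l ∈ Finset.range p, (C (e (l + 1)) + C (e 0) * X)

theorem subst_narayanaKernel [CommRing R] (p : ℕ) (e : ℕ → R) {v : R⟦X⟧} (hv : HasSubst v) :
    (narayanaKernel p e).subst v
      = (1 + v) * ∏ l ∈ Finset.range p, (C (e (l + 1)) + C (e 0) * v) := by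
  have hX : substAlgHom hv (X : R⟦X⟧) = v := by rw [coe_substAlgHom, subst_X hv]
  have hC (r : R) : substAlgHom hv (C r : R⟦X⟧) = (C r : R⟦X⟧) := by
    rw [coe_substAlgHom, subst_C]
    rfl
  rw [← coe_substAlgHom hv, narayanaKernel]
  simp only [map_mul, map_add, map_one, map_prod, hX, hC]

theorem coeff_narayanaKernel_pow [CommSemiring R] (p n : ℕ) (e : ℕ → R) :
    coeff n (narayanaKernel p e ^ (n + 1))
      = ∑ j ∈ Finset.Nat.antidiagonalTuple (p + 1) (p * (n + 1) + 1) with ∀ i, 1 ≤ j i,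
          (∏ i, ((n + 1).choose (j i) : R)) *
            (e 0 ^ (j 0 - 1) * ∏ l : Fin p, e l.succ ^ j l.succ) := by
  let a : Fin (p + 1) → R := Fin.cons 1 fun l => e l.succ
  let b : Fin (p + 1) → R := Fin.cons 1 fun _ => e 0
  have hkernel : narayanaKernel p e ^ (n + 1) = ∏ i, (C (a i) + C (b i) * X) ^ (n + 1) := by
    rw [Finset.prod_pow, Fin.prod_univ_succ, narayanaKernel, Finset.prod_range]
    simp [a, b]
  rw [hkernel, coeff_prod_eq_sum_antidiagonalTuple, ← sum_antidiagonalTuple_sub]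
  · refine Finset.sum_congr rfl fun m hm => ?_
    rw [Finset.Nat.mem_antidiagonalTuple] at hm
    have hm_le (i) : m i ≤ n + 1 :=
      (Finset.single_le_sum (fun _ _ => Nat.zero_le _) (Finset.mem_univ i)).trans
        (hm.trans_le n.le_succ)
    rw [Fin.sum_univ_succ] at hm
    simp only [coeff_C_add_C_mul_X_pow, Finset.prod_mul_distrib, Nat.choose_symm (hm_le _)]
    rw [Fin.prod_univ_succ (fun i => a i ^ _), Fin.prod_univ_succ (fun i => b i ^ _)]
    simp only [a, b, Fin.cons_zero, Fin.cons_succ, one_pow, one_mul, Finset.prod_pow_eq_pow_sum]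
    rw [show n + 1 - m 0 - 1 = ∑ l : Fin p, m l.succ by omega]
    ring
  · intro j i hi
    rw [Finset.prod_eq_zero (Finset.mem_univ i) (by simp [Nat.choose_eq_zero_of_lt hi]), zero_mul]

end NarayanaKernel

section PeriodicWord

/-- The distance from `c` to the nearest multiple of `2p`: the height after `c` letters of the
zigzag path which a letter `l` takes from `l - 1` up to `l` and a letter `l*` from `l` down to
`l - 1`, when it reads the periodic word `W₀ W₀ W₀ …`. -/
def zigzag (p c : ℕ) : ℕ :=
  min (c % (2 * p)) (2 * p - c % (2 * p))

variable {p : ℕ}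

theorem zigzag_le (p c : ℕ) : zigzag p c ≤ p := by
  unfold zigzag
  omega

theorem zigzag_of_le {c : ℕ} (h : c ≤ p) : zigzag p c = c := by
  rcases Nat.eq_zero_or_pos p with rfl | hp
  · simp_all [zigzag]
  · rw [zigzag, Nat.mod_eq_of_lt (by omega)]
    omega

theorem zigzag_add_right (p c : ℕ) : zigzag p (c + 2 * p) = zigzag p c := by
  simp [zigzag]

theorem dvd_add_add_one_iff_mod {q m n : ℕ} (hq : 0 < q) :
    q ∣ m + n + 1 ↔ m % q + n % q + 1 = q := by
  have hm := Nat.mod_lt m hq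
  have hn := Nat.mod_lt n hq
  have hmod : m % q + n % q + 1 ≡ m + n + 1 [MOD q] :=
    ((Nat.mod_modEq m q).add (Nat.mod_modEq n q)).add_right 1
  rw [← hmod.dvd_iff dvd_rfl]
  exact ⟨fun h => Nat.eq_of_dvd_of_lt_two_mul (Nat.succ_ne_zero _) h (by omega),
    fun h => (dvd_refl q).trans h.symm.dvd⟩

theorem zigzag_eq_of_dvd_add {m n : ℕ} (h : 2 * p ∣ m + n) : zigzag p m = zigzag p n := by
  rcases Nat.eq_zero_or_pos p with rfl | hp
  · simp [zigzag]
  have hm := Nat.mod_lt m (show 0 < 2 * p by omega)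
  have hn := Nat.mod_lt n (show 0 < 2 * p by omega)
  have hmod : m % (2 * p) + n % (2 * p) ≡ m + n [MOD 2 * p] :=
    (Nat.mod_modEq m _).add (Nat.mod_modEq n _)
  have hsum : m % (2 * p) + n % (2 * p) = 0 ∨ m % (2 * p) + n % (2 * p) = 2 * p :=
    or_iff_not_imp_left.2 fun hne =>
      Nat.eq_of_dvd_of_lt_two_mul hne ((hmod.dvd_iff dvd_rfl).2 h) (by omega)
  unfold zigzag
  omega

theorem labelW_zero_succ_eq_false_iff (hp : 0 < p) {m l : ℕ} :
    labelW p 0 (m + 1) = (l, false) ↔ m % (2 * p) < p ∧ m % (2 * p) + 1 = l := by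
  have := Nat.mod_lt m (show 0 < 2 * p by omega)
  simp only [labelW, letter0, Nat.add_sub_cancel, Nat.sub_zero, Nat.add_mod_right]
  split_ifs <;> simp only [Prod.mk.injEq, reduceCtorEq, and_true, and_false, false_iff] <;> omega

theorem labelW_zero_succ_eq_true_iff (hp : 0 < p) {m l : ℕ} :
    labelW p 0 (m + 1) = (l, true) ↔ p ≤ m % (2 * p) ∧ m % (2 * p) + l = 2 * p := by
  have := Nat.mod_lt m (show 0 < 2 * p by omega)
  simp only [labelW, letter0, Nat.add_sub_cancel, Nat.sub_zero, Nat.add_mod_right]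
  split_ifs <;> simp only [Prod.mk.injEq, reduceCtorEq, and_true, and_false, false_iff] <;> omega

theorem exists_labelW_matching_iff (hp : 0 < p) {m n : ℕ} :
    (∃ l, 1 ≤ l ∧ l ≤ p ∧
      ((labelW p 0 (m + 1) = (l, false) ∧ labelW p 0 (n + 1) = (l, true)) ∨
        (labelW p 0 (m + 1) = (l, true) ∧ labelW p 0 (n + 1) = (l, false)))) ↔
      2 * p ∣ m + n + 1 := by
  simp only [labelW_zero_succ_eq_false_iff hp, labelW_zero_succ_eq_true_iff hp]
  rw [dvd_add_add_one_iff_mod (by omega)]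
  constructor
  · rintro ⟨l, -, -, h | h⟩ <;> omega
  · intro h
    rcases lt_or_ge (m % (2 * p)) p with hmp | hmp
    · exact ⟨m % (2 * p) + 1, by omega⟩
    · exact ⟨n % (2 * p) + 1, by omega⟩

theorem labelW_zero_succ_rightLeg_iff (hp : 0 < p) {m l : ℕ} :
    labelW p 0 (m + 1) = (l + 1, false) ∨ labelW p 0 (m + 1) = (l, true) ↔ zigzag p m = l := by
  have := Nat.mod_lt m (show 0 < 2 * p by omega)
  rw [labelW_zero_succ_eq_false_iff hp, labelW_zero_succ_eq_true_iff hp, zigzag]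
  omega

theorem add_modEq_one_iff_dvd (a c q : ℕ) : a + 1 + (c + 1) ≡ 1 [MOD q] ↔ q ∣ a + c + 1 := by
  rw [Nat.ModEq.comm, Nat.modEq_iff_dvd' (by omega), show a + 1 + (c + 1) - 1 = a + c + 1 by omega]

variable {π : Finset (ℕ × ℕ)}

theorem jstat_zero_eq_card_zigzag (hp : 0 < p) (hπ : ∀ x ∈ π, 0 < x.2) (l : ℕ) :
    jstat p 0 π l = (π.filter fun x => zigzag p (x.2 - 1) = l).card := by
  rw [jstat, ← Finset.card_union_of_disjoint (Finset.disjoint_filter.2 fun x _ h h' => by simp_all),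
    ← Finset.filter_or]
  refine congrArg _ (Finset.filter_congr fun x hx => ?_)
  rw [← labelW_zero_succ_rightLeg_iff hp, Nat.sub_add_cancel (hπ x hx)]

variable {R : Type*} [CommSemiring R]

theorem prod_pow_jstat_eq_prod_zigzag (hp : 0 < p) (hπ : ∀ x ∈ π, 0 < x.2) (e : ℕ → R) :
    ∏ l : Fin (p + 1), e l ^ jstat p 0 π l = ∏ x ∈ π, e (zigzag p (x.2 - 1)) := by
  rw [← Finset.prod_range fun l => e l ^ jstat p 0 π l, ← Finset.prod_fiberwise_of_maps_to'
    (fun x _ => Finset.mem_range.2 (Nat.lt_succ_of_le (zigzag_le p (x.2 - 1))))]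
  simp only [Finset.prod_const, jstat_zero_eq_card_zigzag hp hπ]

/-- The weight of a block read at the word `W₀ W₀ W₀ …`: it vanishes unless the labels of the two
legs match, and is otherwise the variable indexed by the height of the zigzag path between the
left leg and the next letter, equivalently just before the right leg. -/
def arcWeight (p : ℕ) (e : ℕ → R) (x : ℕ × ℕ) : R :=
  if x.1 + x.2 ≡ 1 [MOD 2 * p] then e (zigzag p x.1) else 0

theorem arcWeight_add_right (p : ℕ) (e : ℕ → R) (x : ℕ × ℕ) :
    arcWeight p e (x.1 + 2 * p, x.2 + 2 * p) = arcWeight p e x := by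
  have : x.1 + 2 * p + (x.2 + 2 * p) ≡ 1 [MOD 2 * p] ↔ x.1 + x.2 ≡ 1 [MOD 2 * p] := by
    simp [Nat.ModEq, ← add_assoc, add_right_comm x.1]
  simp only [arcWeight, this, zigzag_add_right]

/-- The weighted count of the noncrossing pair partitions of `{a + 1, …, b}` which are adapted to
the labels of these positions in the word `W₀ W₀ W₀ …`. -/
noncomputable def wordSum (p : ℕ) (e : ℕ → R) (a b : ℕ) : R :=
  ncSum (arcWeight p e) a b

theorem wordSum_of_le (e : ℕ → R) {a b : ℕ} (h : b ≤ a) : wordSum p e a b = 1 :=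
  ncSum_of_le _ h

theorem wordSum_add_right (e : ℕ → R) (a b : ℕ) :
    wordSum p e (a + 2 * p) (b + 2 * p) = wordSum p e a b := by
  simp only [wordSum, ncSum_add_right, arcWeight_add_right]

theorem wordSum_eq_sum (e : ℕ → R) {a b : ℕ} (hab : a < b) :
    wordSum p e a b = e (zigzag p (a + 1)) * ∑ c ∈ Finset.Ico (a + 1) b with 2 * p ∣ a + c + 1,
      wordSum p e (a + 1) c * wordSum p e (c + 1) b := by
  rw [wordSum, ncSum_eq_sum _ hab, Finset.sum_filter, Finset.mul_sum]
  refine Finset.sum_congr rfl fun c _ => ?_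
  simp only [arcWeight, add_modEq_one_iff_dvd, wordSum]
  split_ifs <;> simp

theorem mem_NCset_zero_iff (hp : 0 < p) {k : ℕ} :
    π ∈ NCset p 0 k ↔ IsNCPairing 0 (2 * p * k) π ∧ ∀ x ∈ π, x.1 + x.2 ≡ 1 [MOD 2 * p] := by
  have hadapted : AdaptedNCPP p 0 k π ↔
      IsNCPairing 0 (2 * p * k) π ∧ ∀ x ∈ π, x.1 + x.2 ≡ 1 [MOD 2 * p] := by
    rw [AdaptedNCPP, ← isNCPairing_zero_iff_isNCPP]
    refine and_congr_right fun hπ => forall₂_congr fun x hx => ?_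
    have hmem := hπ.1 x hx
    have hmatch := exists_labelW_matching_iff hp (m := x.1 - 1) (n := x.2 - 1)
    rwa [← add_modEq_one_iff_dvd, Nat.sub_add_cancel (by omega),
      Nat.sub_add_cancel (by omega)] at hmatch
  simp only [← hadapted, NCset, Finset.mem_filter, Finset.mem_powerset, and_iff_right_iff_imp]
  exact fun h => (isNCPairing_zero_iff_isNCPP.2 h.1).subset_Icc_product

theorem sum_NCset_eq_wordSum (hp : 0 < p) (k : ℕ) (e : ℕ → R) :
    ∑ π ∈ NCset p 0 k, ∏ l : Fin (p + 1), e l ^ jstat p 0 π l = wordSum p e 0 (2 * p * k) := by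
  have hfilter : NCset p 0 k =
      (ncPairings 0 (2 * p * k)).filter fun π => ∀ x ∈ π, x.1 + x.2 ≡ 1 [MOD 2 * p] := by
    ext π
    rw [mem_NCset_zero_iff hp, Finset.mem_filter, mem_ncPairings]
  simp only [hfilter, Finset.sum_filter, wordSum, ncSum, arcWeight, Finset.prod_ite_zero]
  refine Finset.sum_congr rfl fun π hπ => if_ctx_congr Iff.rfl (fun hmatch => ?_) fun _ => rfl
  have hpos {x} (hx : x ∈ π) : 0 < x.2 := by
    have := (mem_ncPairings.1 hπ).1 x hx
    omega
  rw [prod_pow_jstat_eq_prod_zigzag hp fun x hx => hpos hx]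
  refine Finset.prod_congr rfl fun x hx => congrArg e (zigzag_eq_of_dvd_add ?_)
  rw [add_comm, ← Nat.add_sub_assoc (hpos hx)]
  exact (Nat.modEq_iff_dvd' (by have := hpos hx; omega)).1 (hmatch x hx).symm

end PeriodicWord

section FunctionalEquation

open PowerSeries

variable {R : Type*} [CommRing R] {p : ℕ} (e : ℕ → R)

theorem wordSum_add_mul_right (a b n : ℕ) :
    wordSum p e (a + 2 * p * n) (b + 2 * p * n) = wordSum p e a b := by
  induction n with
  | zero => rfl
  | succ n ih => rw [Nat.mul_succ, ← add_assoc, ← add_assoc, wordSum_add_right, ih]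

/-- The generating series in `n` of the weighted adapted partitions of `{a + 1, …, b + 2pn}`. -/
noncomputable def wordSeries (p : ℕ) (e : ℕ → R) (a b : ℕ) : R⟦X⟧ :=
  mk fun n => wordSum p e a (b + 2 * p * n)

theorem wordSeries_add_right (a b : ℕ) :
    wordSeries p e (a + 2 * p) (b + 2 * p) = wordSeries p e a b := by
  simp only [wordSeries, add_right_comm b (2 * p), wordSum_add_right]

theorem wordSeries_self (a : ℕ) :
    wordSeries p e a a = 1 + X * wordSeries p e a (a + 2 * p) := by
  ext n
  cases n with
  | zero => simp [wordSeries, wordSum_of_le]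
  | succ n =>
    rw [map_add, coeff_succ_X_mul, coeff_one, if_neg n.succ_ne_zero, zero_add, wordSeries,
      wordSeries, coeff_mk, coeff_mk, Nat.mul_succ, add_assoc, add_comm (2 * p)]

theorem filter_dvd_Ico_eq_image {a b c : ℕ} (hac : a < c) (hca : c ≤ a + 2 * p)
    (hdvd : 2 * p ∣ a + c + 1) (hcb : c < b) (hbc : b ≤ c + 2 * p) (n : ℕ) :
    (Finset.Ico (a + 1) (b + 2 * p * n)).filter (fun m => 2 * p ∣ a + m + 1)
      = (Finset.range (n + 1)).image fun i => c + 2 * p * i := by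
  ext m
  simp only [Finset.mem_filter, Finset.mem_Ico, Finset.mem_image, Finset.mem_range]
  constructor
  · rintro ⟨⟨ham, hmb⟩, hm⟩
    rcases lt_or_ge m c with hmc | hcm
    · have := Nat.le_of_dvd (by omega) (Nat.dvd_sub hdvd hm)
      omega
    · obtain ⟨i, hi⟩ := Nat.dvd_sub hm hdvd
      refine ⟨i, lt_of_mul_lt_mul_left (a := 2 * p) ?_ (Nat.zero_le _), by omega⟩
      rw [Nat.mul_succ]
      omega
  · rintro ⟨i, hi, rfl⟩
    have := Nat.mul_le_mul_left (2 * p) (Nat.lt_succ_iff.1 hi)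
    refine ⟨by omega, ?_⟩
    rw [← add_assoc, add_right_comm]
    exact hdvd.add (dvd_mul_right _ _)

/-- The block starting at `a + 1` can only end at one of `c + 1, c + 1 + 2p, c + 1 + 4p, …`. -/
theorem wordSeries_eq_mul {a b c : ℕ} (hac : a < c) (hca : c ≤ a + 2 * p)
    (hdvd : 2 * p ∣ a + c + 1) (hcb : c < b) (hbc : b ≤ c + 2 * p) :
    wordSeries p e a b
      = C (e (zigzag p (a + 1))) * wordSeries p e (a + 1) c * wordSeries p e (c + 1) b := by
  have hp : 0 < 2 * p := by omega
  ext n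
  rw [mul_assoc, coeff_C_mul, coeff_mul, Finset.Nat.sum_antidiagonal_eq_sum_range_succ_mk,
    wordSeries, coeff_mk, wordSum_eq_sum e (by omega),
    filter_dvd_Ico_eq_image hac hca hdvd hcb hbc, Finset.sum_image (by simp [hp.ne'])]
  refine congrArg _ (Finset.sum_congr rfl fun i hi => ?_)
  have hin : n = n - i + i := by rw [Finset.mem_range] at hi; omega
  conv_lhs => rw [hin, mul_add, ← add_assoc, add_right_comm c, wordSum_add_mul_right]
  simp only [wordSeries, coeff_mk]

/-- The series of the words which start at height `l` of the zigzag path, on its way up, and end at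
the same point of the path `n ≥ 0` periods later. -/
noncomputable def ascendingSeries (p : ℕ) (e : ℕ → R) (l : ℕ) : R⟦X⟧ :=
  wordSeries p e l l

/-- The series of the words which start at height `l` of the zigzag path, on its way down, and end
at the same point of the path `n ≥ 0` periods later. The index `l` is meant to be at most `p`. -/
noncomputable def descendingSeries (p : ℕ) (e : ℕ → R) (l : ℕ) : R⟦X⟧ :=
  wordSeries p e (2 * p - l) (2 * p - l)

/-- The series of the words which lead the zigzag path from height `l` on its way up to height `l`
on its way down, so that the shortest one passes a peak. The index `l` is meant to be at most
`p`. -/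
noncomputable def peakSeries (p : ℕ) (e : ℕ → R) (l : ℕ) : R⟦X⟧ :=
  wordSeries p e l (2 * p - l)

/-- The series of the words which lead the zigzag path from height `l` on its way down to height `l`
on its way up, so that the shortest one passes a valley. The index `l` is meant to be at most
`p`. -/
noncomputable def valleySeries (p : ℕ) (e : ℕ → R) (l : ℕ) : R⟦X⟧ :=
  wordSeries p e (2 * p - l) (2 * p + l)

variable {l : ℕ}

theorem zigzag_two_mul_sub (hl : l ≤ p) : zigzag p (2 * p - l) = l := by
  rw [← zigzag_eq_of_dvd_add (m := l) ⟨1, by omega⟩, zigzag_of_le hl]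

theorem peakSeries_eq (hl : l < p) : peakSeries p e l
    = C (e (l + 1)) * peakSeries p e (l + 1) * descendingSeries p e l := by
  rw [peakSeries, wordSeries_eq_mul e (c := 2 * p - (l + 1)) (by omega) (by omega)
    ⟨1, by omega⟩ (by omega) (by omega), zigzag_of_le hl,
    show 2 * p - (l + 1) + 1 = 2 * p - l by omega]
  rfl

theorem valleySeries_succ (hl : l < p) : valleySeries p e (l + 1)
    = C (e l) * valleySeries p e l * ascendingSeries p e (l + 1) := by
  rw [valleySeries, wordSeries_eq_mul e (c := 2 * p + l) (by omega) (by omega)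
    ⟨2, by omega⟩ (by omega) (by omega), show 2 * p - (l + 1) + 1 = 2 * p - l by omega,
    zigzag_two_mul_sub hl.le, add_assoc (2 * p) l,
    add_comm (2 * p) (l + 1), wordSeries_add_right]
  rfl

theorem ascendingSeries_eq (hl : l < p) : ascendingSeries p e l
    = 1 + X * (C (e (l + 1)) * peakSeries p e (l + 1) * valleySeries p e l) := by
  rw [ascendingSeries, wordSeries_self, wordSeries_eq_mul e (c := 2 * p - (l + 1)) (by omega)
    (by omega) ⟨1, by omega⟩ (by omega) (by omega), zigzag_of_le hl,
    show 2 * p - (l + 1) + 1 = 2 * p - l by omega, add_comm l (2 * p)]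
  rfl

theorem descendingSeries_succ (hl : l < p) : descendingSeries p e (l + 1)
    = 1 + X * (C (e l) * valleySeries p e l * peakSeries p e (l + 1)) := by
  rw [descendingSeries, wordSeries_self, wordSeries_eq_mul e (c := 2 * p + l) (by omega)
    (by omega) ⟨2, by omega⟩ (by omega) (by omega),
    show 2 * p - (l + 1) + 1 = 2 * p - l by omega, zigzag_two_mul_sub hl.le, add_assoc (2 * p) l,
    add_comm (2 * p) (l + 1), wordSeries_add_right]
  rfl

theorem eq_of_eq_one_add_X_mul_mul {f u v : R⟦X⟧} (hu : u = 1 + X * f * u)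
    (hv : v = 1 + X * f * v) : u = v := by
  have hunit : IsUnit (1 - X * f) := by simp [isUnit_iff_constantCoeff]
  refine hunit.mul_left_cancel ?_
  linear_combination hu - hv

theorem ascendingSeries_eq_descendingSeries (hl : l < p) :
    ascendingSeries p e l = descendingSeries p e l := by
  cases l with
  | zero =>
    have := wordSeries_add_right (p := p) e 0 0
    rw [zero_add] at this
    exact this.symm
  | succ l =>
    refine eq_of_eq_one_add_X_mul_mul
      (f := C (e l) * valleySeries p e l * (C (e (l + 2)) * peakSeries p e (l + 2))) ?_ ?_
    · conv_lhs => rw [ascendingSeries_eq e hl, valleySeries_succ e (by omega)]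
      ring
    · conv_lhs => rw [descendingSeries_succ e (by omega), peakSeries_eq e hl]
      ring

theorem C_mul_descendingSeries (hl : l ≤ p) :
    C (e l) * descendingSeries p e l = C (e l) + C (e 0) * (descendingSeries p e 0 - 1) := by
  induction l with
  | zero => ring
  | succ l ih =>
    have hasc := ascendingSeries_eq e hl
    rw [ascendingSeries_eq_descendingSeries e hl] at hasc
    linear_combination C (e (l + 1)) * descendingSeries_succ e hl - C (e l) * hasc + ih (by omega)

theorem peakSeries_zero_eq_prod_mul (hl : l ≤ p) : peakSeries p e 0
    = (∏ i ∈ Finset.range l, C (e (i + 1)) * descendingSeries p e i) * peakSeries p e l := by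
  induction l with
  | zero => simp
  | succ l ih =>
    rw [ih (by omega), peakSeries_eq e hl, Finset.prod_range_succ]
    ring

theorem peakSeries_zero (p : ℕ) (e : ℕ → R) : peakSeries p e 0
    = descendingSeries p e 0 *
        ∏ l ∈ Finset.range p, C (e (l + 1)) * descendingSeries p e (l + 1) := by
  have hpeak : peakSeries p e p = descendingSeries p e p := by
    rw [peakSeries, descendingSeries, show 2 * p - p = p by omega]
  rw [peakSeries_zero_eq_prod_mul e le_rfl, hpeak, Finset.prod_mul_distrib,
    Finset.prod_mul_distrib, mul_assoc, ← Finset.prod_range_succ, Finset.prod_range_succ']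
  ring

theorem wordSeries_sub_one_eq_X_mul_subst (hp : 0 < p) :
    wordSeries p e 0 0 - 1 = X * (narayanaKernel p e).subst (wordSeries p e 0 0 - 1) := by
  have hdesc : descendingSeries p e 0 = wordSeries p e 0 0 :=
    (ascendingSeries_eq_descendingSeries e hp).symm
  have hpeak : wordSeries p e 0 0 = 1 + X * peakSeries p e 0 := by
    rw [wordSeries_self, zero_add]
    rfl
  have hsubst : HasSubst (wordSeries p e 0 0 - 1) :=
    HasSubst.of_constantCoeff_zero' (by rw [hpeak]; simp)
  have hfactor (l) (hl : l ∈ Finset.range p) : C (e (l + 1)) * descendingSeries p e (l + 1)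
      = C (e (l + 1)) + C (e 0) * (wordSeries p e 0 0 - 1) := by
    rw [C_mul_descendingSeries e (Finset.mem_range.1 hl), hdesc]
  rw [subst_narayanaKernel p e hsubst, ← Finset.prod_congr rfl hfactor, add_sub_cancel, ← hdesc,
    ← peakSeries_zero, hdesc]
  exact sub_eq_of_eq_add' hpeak

theorem coeff_wordSeries_zero_zero (k : ℕ) :
    coeff k (wordSeries p e 0 0) = wordSum p e 0 (2 * p * k) := by
  rw [wordSeries, coeff_mk, zero_add]

end FunctionalEquation

theorem P_eq_fussNarayana_general {K : Type*} [Field K] [CharZero K] (p k : ℕ) (hp : 1 ≤ p)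
    (hk : 1 ≤ k) (d : Fin (p + 1) → K) :
    (∑ π ∈ NCset p 0 k, ∏ l : Fin (p + 1), d l ^ jstat p 0 π (l : ℕ)) =
      ∑ j ∈ (Finset.Nat.antidiagonalTuple (p + 1) (p * k + 1)).filter
          (fun j => ∀ l, 1 ≤ j l),
        (1 / (k : K)) * (∏ i, (Nat.choose k (j i) : K)) *
          (d 0 ^ (j 0 - 1) * ∏ l : Fin p, d l.succ ^ j l.succ) := by
  obtain ⟨e, rfl⟩ : ∃ e : ℕ → K, e ∘ Fin.val = d := Fin.val_injective.surjective_comp_right d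
  obtain ⟨n, rfl⟩ : ∃ n, k = n + 1 := ⟨k - 1, by omega⟩
  have hlagrange := succ_mul_coeff_succ_of_eq_X_mul_subst (wordSeries_sub_one_eq_X_mul_subst e hp) n
  rw [map_sub, PowerSeries.coeff_one, if_neg n.succ_ne_zero, sub_zero, coeff_wordSeries_zero_zero,
    coeff_narayanaKernel_pow, ← Nat.cast_succ] at hlagrange
  have hn : ((n + 1 : ℕ) : K) ≠ 0 := Nat.cast_ne_zero.2 n.succ_ne_zero
  simp only [mul_assoc, ← Finset.mul_sum]
  rw [one_div, eq_inv_mul_iff_mul_eq₀ hn]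
  exact (congrArg _ (sum_NCset_eq_wordSum hp (n + 1) e)).trans hlagrange

/-- Theorem 4.1 (explicit form of the limit-moment polynomials): for `p, k ≥ 1`,
`P_k(d₀, …, d_p) = Σ_{π ∈ NC²₂ₚₖ(W₀ᵏ)} d₀^{j₀(π)} ⋯ d_p^{j_p(π)}` equals
`Σ (1/k) ∏ᵢ C(k, jᵢ) · d₀^{j₀−1} d₁^{j₁} ⋯ d_p^{j_p}`, the sum running over all
tuples of positive integers with `j₀ + ⋯ + j_p = pk + 1`. -/
theorem P_eq_fussNarayana (p k : ℕ) (hp : 1 ≤ p) (hk : 1 ≤ k)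
    (d : Fin (p + 1) → ℝ) :
    (∑ π ∈ NCset p 0 k, ∏ l : Fin (p + 1), d l ^ jstat p 0 π (l : ℕ)) =
      ∑ j ∈ (Finset.Nat.antidiagonalTuple (p + 1) (p * k + 1)).filter
          (fun j => ∀ l, 1 ≤ j l),
        (1 / (k : ℝ)) * (∏ i, (Nat.choose k (j i) : ℝ)) *
          (d 0 ^ (j 0 - 1) * ∏ l : Fin p, d l.succ ^ j l.succ) :=
  P_eq_fussNarayana_general p k hp hk d
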